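/- Let r, r̂ : 𝒜 → [0,1] with r(a) ≥ r̂(a) for every a ∈ 𝒜 (pessimism), and let π̂ be the maximizer of J(·; r̂) over Δ(𝒜). Then the forward-KL-regularized suboptimality satisfies SubOpt(π̂) = J(π*; r) − J(π̂; r) ≤ 2η Σ_{a ∈ 𝒜} (π*(a)²/π^ref(a)) (r(a) − r̂(a))². -/

import Mathlib

open Finset

/-- Forward-KL-regularized objective `J(π; g) = ⟨g, π⟩ - η⁻¹ KL(π^ref ‖ π)`
for a bandit with finite action set. -/
noncomputable def J {A : Type*} [Fintype A] (η : ℝ) (pref g p : A → ℝ) : ℝ :=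
  ∑ a, g a * p a - η⁻¹ * ∑ a, pref a * Real.log (pref a / p a)

/-- `p` maximizes `J(·; g)` over the simplex `Δ(A)` (on which the objective is `-∞`
unless the policy has full support, so it suffices to compare with full-support
distributions). -/
def IsMaximizer {A : Type*} [Fintype A] (η : ℝ) (pref g p : A → ℝ) : Prop :=
  (∀ a, 0 ≤ p a) ∧ ∑ a, p a = 1 ∧ (∀ a, 0 < p a) ∧
    ∀ q : A → ℝ, (∀ a, 0 ≤ q a) → ∑ a, q a = 1 → (∀ a, 0 < q a) →
      J η pref g q ≤ J η pref g p

theorem foc_dir {A : Type*} [Fintype A] (η : ℝ)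
    (pref g p : A → ℝ) (hpref : ∀ a, 0 < pref a)
    (h : IsMaximizer η pref g p) (v : A → ℝ) (hv : ∑ a, v a = 0) :
    ∑ a, (g a + η⁻¹ * (pref a / p a)) * v a = 0 := by
  obtain ⟨_, hsum, hpos, hmax⟩ := h
  have hev : ∀ᶠ t : ℝ in nhds 0, ∀ a, 0 < p a + t * v a := by
    rw [Filter.eventually_all]
    intro a
    have hc : Continuous (fun t : ℝ => p a + t * v a) := by fun_prop
    exact hc.continuousAt.eventually_const_lt (by simpa using hpos a)
  have hloc : IsLocalMax (fun t : ℝ => J η pref g (fun a => p a + t * v a)) 0 := by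
    filter_upwards [hev] with t ht
    have := hmax (fun a => p a + t * v a) (fun a => (ht a).le)
      (by rw [Finset.sum_add_distrib, ← Finset.mul_sum, hv, hsum]; ring) ht
    simpa using this
  have hder : HasDerivAt (fun t : ℝ => J η pref g (fun a => p a + t * v a))
      (∑ a, g a * v a - η⁻¹ * ∑ a, pref a * (-(v a / p a))) 0 := by
    unfold J
    have hl : ∀ a, HasDerivAt (fun t : ℝ => p a + t * v a) (v a) 0 := by
      intro a
      simpa using ((hasDerivAt_id (0 : ℝ)).mul_const (v a)).const_add (p a)
    refine HasDerivAt.sub (HasDerivAt.fun_sum fun a _ => (hl a).const_mul (g a))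
      (HasDerivAt.const_mul _ (HasDerivAt.fun_sum fun a _ => HasDerivAt.const_mul _ ?_))
    have h1 : HasDerivAt (fun t : ℝ => Real.log (pref a) - Real.log (p a + t * v a))
        (-(v a / p a)) 0 := by
      have := ((hl a).log (by simpa using (hpos a).ne')).const_sub (Real.log (pref a))
      simpa using this
    refine h1.congr_of_eventuallyEq ?_
    filter_upwards [hev] with t ht
    exact Real.log_div (hpref a).ne' (ht a).ne'
  have h0 := hloc.hasDerivAt_eq_zero hder
  rw [← h0, Finset.mul_sum, ← Finset.sum_sub_distrib]
  refine Finset.sum_congr rfl fun a _ => ?_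
  ring

theorem foc {A : Type*} [Fintype A] (η : ℝ) (hη : 0 < η)
    (pref g p : A → ℝ) (hpref : ∀ a, 0 < pref a)
    (h : IsMaximizer η pref g p) :
    ∃ l : ℝ, ∀ a, η * p a * (l - g a) = pref a := by
  classical
  have hne : Nonempty A := by
    by_contra hn
    rw [not_nonempty_iff] at hn
    have := h.2.1
    simp at this
  obtain ⟨b⟩ := hne
  refine ⟨g b + η⁻¹ * (pref b / p b), fun a => ?_⟩
  have := foc_dir η pref g p hpref h (fun c => Pi.single (M := fun _ => ℝ) a 1 c - Pi.single (M := fun _ => ℝ) b 1 c)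
    (by simp)
  simp only [mul_sub, Finset.sum_sub_distrib] at this
  simp only [Pi.single_apply, mul_ite, mul_one, mul_zero, Finset.sum_ite_eq', Finset.mem_univ,
    if_true] at this
  have e : g b + η⁻¹ * (pref b / p b) - g a = η⁻¹ * (pref a / p a) := by linarith
  rw [e]
  have := (h.2.2.1 a).ne'
  field_simp

/-- Under pessimism `r̂ ≤ r`, the forward-KL-regularized suboptimality
of the maximizer `π̂` of `J(·; r̂)` satisfies
`SubOpt(π̂) ≤ 2η ∑_a (π*(a)²/π^ref(a)) (r(a) - r̂(a))²`. -/
theorem stmt4 {A : Type*} [Fintype A]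
    (η : ℝ) (hη : 0 < η)
    (pref : A → ℝ) (hpref : ∀ a, 0 < pref a) (hprefsum : ∑ a, pref a = 1)
    (r rhat : A → ℝ)
    (hr : ∀ a, r a ∈ Set.Icc (0 : ℝ) 1) (hrhat : ∀ a, rhat a ∈ Set.Icc (0 : ℝ) 1)
    (hpess : ∀ a, rhat a ≤ r a)
    (πstar : A → ℝ) (hstar : IsMaximizer η pref r πstar)
    (πhat : A → ℝ) (hhat : IsMaximizer η pref rhat πhat) :
    J η pref r πstar - J η pref r πhat ≤
      2 * η * ∑ a, (πstar a) ^ 2 / pref a * (r a - rhat a) ^ 2 := by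
  obtain ⟨l, hl⟩ := foc η hη pref r πstar hpref hstar
  obtain ⟨m, hm⟩ := foc η hη pref rhat πhat hpref hhat
  obtain ⟨-, hps, hp, -⟩ := hstar
  obtain ⟨-, hqs, hq, -⟩ := hhat
  -- key identity
  have hx : ∀ a, πstar a - πhat a
      = η * (πstar a * πhat a / pref a * ((r a - rhat a) - (l - m))) := by
    intro a
    have h1 := hl a
    have h2 := hm a
    have hw := (hpref a).ne'
    field_simp
    linear_combination (-πstar a) * h2 + πhat a * h1
  have hc : ∀ a, 0 < πstar a * πhat a / pref a := fun a =>
    div_pos (mul_pos (hp a) (hq a)) (hpref a)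
  have hzero : ∑ a, πstar a * πhat a / pref a * ((r a - rhat a) - (l - m)) = 0 := by
    have : η * ∑ a, πstar a * πhat a / pref a * ((r a - rhat a) - (l - m)) = 0 := by
      rw [Finset.mul_sum, ← Finset.sum_congr rfl (fun a _ => hx a), Finset.sum_sub_distrib,
        hps, hqs, sub_self]
    exact (mul_eq_zero.mp this).resolve_left hη.ne'
  have hδ : 0 ≤ l - m := by
    by_contra hneg
    push Not at hneg
    have hne : (Finset.univ : Finset A).Nonempty := by
      by_contra hn
      rw [Finset.not_nonempty_iff_eq_empty] at hn
      rw [hn] at hps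
      simp at hps
    have := Finset.sum_pos (s := Finset.univ)
      (f := fun a => πstar a * πhat a / pref a * ((r a - rhat a) - (l - m)))
      (fun a _ => mul_pos (hc a) (by linarith [hpess a])) hne
    linarith
  -- suboptimality bound
  have hsub : J η pref r πstar - J η pref r πhat
      ≤ η * ∑ a, πstar a * πhat a / pref a * ((r a - rhat a) - (l - m)) ^ 2 := by
    have e : J η pref r πstar - J η pref r πhat =
        ∑ a, ((r a - l) * (πstar a - πhat a)
          + η⁻¹ * (pref a * Real.log (πstar a / πhat a))) := by
      have e0 : ∑ a, l * (πstar a - πhat a) = 0 := by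
        rw [← Finset.mul_sum, Finset.sum_sub_distrib, hps, hqs]; ring
      unfold J
      rw [← sub_zero (_ - _ : ℝ), ← e0]
      simp only [Finset.mul_sum, ← Finset.sum_sub_distrib]
      refine Finset.sum_congr rfl fun a _ => ?_
      rw [Real.log_div (hpref a).ne' (hp a).ne', Real.log_div (hpref a).ne' (hq a).ne',
        Real.log_div (hp a).ne' (hq a).ne']
      ring
    rw [e, Finset.mul_sum]
    refine Finset.sum_le_sum fun a _ => ?_
    have hlog := Real.log_le_sub_one_of_pos (div_pos (hp a) (hq a))
    have h3 : η⁻¹ * (pref a * Real.log (πstar a / πhat a))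
        ≤ η⁻¹ * (pref a * (πstar a / πhat a - 1)) :=
      mul_le_mul_of_nonneg_left (mul_le_mul_of_nonneg_left hlog (hpref a).le)
        (inv_pos.mpr hη).le
    have h4 : η⁻¹ * (pref a * (πstar a / πhat a - 1)) = (m - rhat a) * (πstar a - πhat a) := by
      rw [← hm a]
      have := (hq a).ne'
      field_simp
    have h5 : η * (πstar a * πhat a / pref a * ((r a - rhat a) - (l - m)) ^ 2)
        = (πstar a - πhat a) * ((r a - rhat a) - (l - m)) := by
      rw [hx a]; ring
    rw [h5]
    linarith
  have hvar : ∑ a, πstar a * πhat a / pref a * ((r a - rhat a) - (l - m)) ^ 2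
      = ∑ a, πstar a * πhat a / pref a * ((r a - rhat a) - (l - m)) * (r a - rhat a) := by
    rw [← sub_zero (∑ a, πstar a * πhat a / pref a * ((r a - rhat a) - (l - m)) * (r a - rhat a)),
      ← mul_zero (l - m), ← hzero, Finset.mul_sum, ← Finset.sum_sub_distrib]
    refine Finset.sum_congr rfl fun a _ => ?_
    ring
  have hS : ∀ a, 0 ≤ (πstar a) ^ 2 / pref a * (r a - rhat a) ^ 2 := fun a =>
    mul_nonneg (div_nonneg (sq_nonneg _) (hpref a).le) (sq_nonneg _)
  have hfin : ∑ a, πstar a * πhat a / pref a * ((r a - rhat a) - (l - m)) * (r a - rhat a)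
      ≤ ∑ a, (πstar a) ^ 2 / pref a * (r a - rhat a) ^ 2 := by
    refine Finset.sum_le_sum fun a _ => ?_
    have hd : 0 ≤ r a - rhat a := sub_nonneg.mpr (hpess a)
    rcases le_total ((r a - rhat a) - (l - m)) 0 with hn | hn
    · exact (mul_nonpos_of_nonpos_of_nonneg
        (mul_nonpos_of_nonneg_of_nonpos (hc a).le hn) hd).trans (hS a)
    · have hqp : πhat a ≤ πstar a := by
        have := hx a
        have := mul_nonneg hη.le (mul_nonneg (hc a).le hn)
        linarith
      have h6 : πstar a * πhat a / pref a ≤ (πstar a) ^ 2 / pref a := by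
        rw [pow_two]
        exact div_le_div_of_nonneg_right (mul_le_mul_of_nonneg_left hqp (hp a).le) (hpref a).le
      have h7 : ((r a - rhat a) - (l - m)) * (r a - rhat a) ≤ (r a - rhat a) ^ 2 := by
        nlinarith
      rw [mul_assoc]
      exact mul_le_mul h6 h7 (mul_nonneg hn hd) ((hc a).le.trans h6)
  have hSS := Finset.sum_nonneg (s := Finset.univ) (fun a _ => hS a)
  rw [hvar] at hsub
  have := mul_le_mul_of_nonneg_left hfin hη.le
  have := mul_nonneg hη.le hSS
  linarith
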